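/- Let n ≥ 3, let Γ be an access structure on n players satisfying monotonicity, no-cloning and no-redundancy, and let ψ be a pure QSS state for Γ. Then for every player i ∈ {1,…,n}, S({i}) = log 2; equivalently, the reduction of ψ to the single qubit of player i equals (1/2)·I. -/

import Mathlib

open Finset

/-- Monotonicity of an access structure on `n` players (players = `Fin n`). -/
def Monotonic {n : ℕ} (Γ : Finset (Fin n) → Prop) : Prop :=
  ∀ A B : Finset (Fin n), Γ A → A ⊆ B → Γ B

/-- No-cloning: a set is authorized iff its complement is not. -/
def NoCloning {n : ℕ} (Γ : Finset (Fin n) → Prop) : Prop :=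
  ∀ A : Finset (Fin n), Γ A ↔ ¬ Γ Aᶜ

/-- `A` is a minimal authorized set of `Γ`. -/
def IsMinimal {n : ℕ} (Γ : Finset (Fin n) → Prop) (A : Finset (Fin n)) : Prop :=
  Γ A ∧ ∀ B : Finset (Fin n), B ⊂ A → ¬ Γ B

/-- No-redundancy: every player lies in some minimal authorized set. -/
def NoRedundancy {n : ℕ} (Γ : Finset (Fin n) → Prop) : Prop :=
  ∀ i : Fin n, ∃ A : Finset (Fin n), IsMinimal Γ A ∧ i ∈ A

noncomputable section

/-- Combine an assignment on `A` and one on `Aᶜ` into a full bit string. -/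
def glue {m : ℕ} (A : Finset (Fin m)) (u : {x // x ∈ A} → Fin 2)
    (w : {x // x ∈ Aᶜ} → Fin 2) : Fin m → Fin 2 :=
  fun x => if h : x ∈ A then u ⟨x, h⟩ else w ⟨x, Finset.mem_compl.mpr h⟩

/-- Reduced density matrix of the pure state `ψ` on the qubit positions in `A`:
the partial trace over the positions outside `A` of `ψψ†`. -/
def reducedDensity {m : ℕ} (ψ : (Fin m → Fin 2) → ℂ) (A : Finset (Fin m)) :
    Matrix ({x // x ∈ A} → Fin 2) ({x // x ∈ A} → Fin 2) ℂ :=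
  fun u v => ∑ w : {x // x ∈ Aᶜ} → Fin 2,
    ψ (glue A u w) * (starRingEnd ℂ) (ψ (glue A v w))

/-- The reduction of `ψ` to `A` is maximally mixed, i.e. equals `2^{-|A|} · I`. -/
def MaximallyMixed {m : ℕ} (ψ : (Fin m → Fin 2) → ℂ) (A : Finset (Fin m)) : Prop :=
  reducedDensity ψ A =
    ((2 : ℂ) ^ A.card)⁻¹ •
      (1 : Matrix ({x // x ∈ A} → Fin 2) ({x // x ∈ A} → Fin 2) ℂ)

open Classical in
/-- Von Neumann entropy (natural logarithm): sum of `-λ log λ` over the eigenvalues. -/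
def vnEntropy {ι : Type} [Fintype ι] [DecidableEq ι] (ρ : Matrix ι ι ℂ) : ℝ :=
  if h : ρ.IsHermitian then ∑ i, Real.negMulLog (h.eigenvalues i) else 0

/-- Entropy of the reduction of `ψ` to the set `A` of qubit positions. -/
def Sent {m : ℕ} (ψ : (Fin m → Fin 2) → ℂ) (A : Finset (Fin m)) : ℝ :=
  vnEntropy (reducedDensity ψ A)

/-- The qubit positions (in `{0,1,…,n} = Fin (n+1)`, where `0` is the reference qubit)
of a set of players `A ⊆ Fin n`: player `i` holds position `i.succ`. -/
def posOf {n : ℕ} (A : Finset (Fin n)) : Finset (Fin (n + 1)) := A.image Fin.succ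

/-- `ψ` is a pure QSS state for the access structure `Γ`: a normalized pure state of
`n+1` qubits (position `0` being the reference qubit `R`) satisfying Recoverability
`S(R) + S(A) - S(R ∪ A) = 2 log 2` for authorized `A` and Secrecy
`S(R) + S(B) - S(R ∪ B) = 0` for unauthorized `B`. -/
structure IsPureQSSState {n : ℕ} (Γ : Finset (Fin n) → Prop)
    (ψ : (Fin (n + 1) → Fin 2) → ℂ) : Prop where
  normalized : ∑ x : Fin (n + 1) → Fin 2, ‖ψ x‖ ^ 2 = 1
  recover : ∀ A : Finset (Fin n), Γ A →
    Sent ψ {0} + Sent ψ (posOf A) - Sent ψ (insert 0 (posOf A)) = 2 * Real.log 2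
  secrecy : ∀ B : Finset (Fin n), ¬ Γ B →
    Sent ψ {0} + Sent ψ (posOf B) - Sent ψ (insert 0 (posOf B)) = 0

end

open scoped ComplexOrder

lemma vnEntropy_eq {ι : Type} [Fintype ι] [DecidableEq ι] {ρ : Matrix ι ι ℂ}
    (h : ρ.IsHermitian) : vnEntropy ρ = ∑ i, Real.negMulLog (h.eigenvalues i) := by
  simp [vnEntropy, h]

lemma vnEntropy_roots {ι : Type} [Fintype ι] [DecidableEq ι] {ρ : Matrix ι ι ℂ}
    (h : ρ.IsHermitian) :
    vnEntropy ρ = (ρ.charpoly.roots.map (fun z : ℂ => Real.negMulLog z.re)).sum := by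
  rw [vnEntropy_eq h, h.roots_charpoly_eq_eigenvalues]
  simp [Multiset.map_map]

lemma vnEntropy_reindex {ι κ : Type} [Fintype ι] [DecidableEq ι] [Fintype κ] [DecidableEq κ]
    {ρ : Matrix ι ι ℂ} (h : ρ.IsHermitian) (e : κ ≃ ι) :
    vnEntropy (ρ.submatrix e e) = vnEntropy ρ := by
  rw [vnEntropy_roots h, vnEntropy_roots (h.submatrix e)]
  have := Matrix.charpoly_reindex e.symm ρ
  simp only [Matrix.reindex_apply, Equiv.symm_symm] at this
  rw [this]

lemma vnEntropy_mul_comm {ι κ : Type} [Fintype ι] [DecidableEq ι] [Fintype κ] [DecidableEq κ]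
    (M : Matrix ι κ ℂ) :
    vnEntropy (M * M.conjTranspose) = vnEntropy (M.conjTranspose * M) := by
  rw [vnEntropy_roots (Matrix.isHermitian_mul_conjTranspose_self M),
    vnEntropy_roots (Matrix.isHermitian_conjTranspose_mul_self M)]
  have h := congrArg (fun p => (p.roots.map (fun z : ℂ => Real.negMulLog z.re)).sum)
    (Matrix.charpoly_mul_comm' M M.conjTranspose)
  have h1 : ∀ (k : ℕ) (p : Polynomial ℂ), p.Monic →
      (((Polynomial.X ^ k * p).roots).map (fun z : ℂ => Real.negMulLog z.re)).sum
        = (p.roots.map (fun z : ℂ => Real.negMulLog z.re)).sum := by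
    intro k p hp
    rw [Polynomial.roots_mul ((Polynomial.monic_X_pow k).mul hp).ne_zero]
    simp [Multiset.map_nsmul, Multiset.sum_nsmul]
  simpa only [h1 _ _ (Matrix.charpoly_monic _)] using h

lemma vnEntropy_transpose {ι : Type} [Fintype ι] [DecidableEq ι]
    {ρ : Matrix ι ι ℂ} (h : ρ.IsHermitian) :
    vnEntropy ρ.transpose = vnEntropy ρ := by
  rw [vnEntropy_roots h, vnEntropy_roots h.transpose, Matrix.charpoly_transpose]

lemma unitary_sum_col {ι : Type} [Fintype ι] [DecidableEq ι] {P : Matrix ι ι ℂ}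
    (hP : star P * P = 1) (i : ι) : ∑ k, ‖P k i‖ ^ 2 = 1 := by
  have := congrFun (congrFun hP i) i
  rw [Matrix.mul_apply] at this
  simp only [Matrix.star_apply, Matrix.one_apply_eq] at this
  have h2 : ((∑ k, ‖P k i‖ ^ 2 : ℝ) : ℂ) = 1 := by
    rw [← this]; push_cast
    exact Finset.sum_congr rfl fun k _ => (Complex.conj_mul' _).symm
  exact_mod_cast h2

lemma unitary_sum_row {ι : Type} [Fintype ι] [DecidableEq ι] {P : Matrix ι ι ℂ}
    (hP : P * star P = 1) (k : ι) : ∑ i, ‖P k i‖ ^ 2 = 1 := by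
  have := congrFun (congrFun hP k) k
  rw [Matrix.mul_apply] at this
  simp only [Matrix.star_apply, Matrix.one_apply_eq] at this
  have h2 : ((∑ i, ‖P k i‖ ^ 2 : ℝ) : ℂ) = 1 := by
    rw [← this]; push_cast
    exact Finset.sum_congr rfl fun k _ => (Complex.mul_conj' _).symm
  exact_mod_cast h2

lemma star_eig {ι : Type} [Fintype ι] [DecidableEq ι] {ρ : Matrix ι ι ℂ}
    (h : ρ.IsHermitian) :
    star (h.eigenvectorUnitary : Matrix ι ι ℂ) * ρ * (h.eigenvectorUnitary : Matrix ι ι ℂ)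
      = Matrix.diagonal (fun i => (h.eigenvalues i : ℂ)) := by
  have := h.conjStarAlgAut_star_eigenvectorUnitary
  rw [Unitary.conjStarAlgAut_star_apply] at this
  exact this

lemma spec_eq {ι : Type} [Fintype ι] [DecidableEq ι] {ρ : Matrix ι ι ℂ}
    (h : ρ.IsHermitian) :
    ρ = (h.eigenvectorUnitary : Matrix ι ι ℂ) * Matrix.diagonal (fun i => (h.eigenvalues i : ℂ))
      * star (h.eigenvectorUnitary : Matrix ι ι ℂ) := by
  have := h.spectral_theorem
  rw [Unitary.conjStarAlgAut_apply] at this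
  exact this

lemma diag_entry {ι : Type} [Fintype ι] [DecidableEq ι] {ρ : Matrix ι ι ℂ}
    (h : ρ.IsHermitian) (W : Matrix ι ι ℂ) (i : ι) :
    (star W * ρ * W) i i = ((∑ k, ‖(star (h.eigenvectorUnitary : Matrix ι ι ℂ) * W) k i‖ ^ 2
      * h.eigenvalues k : ℝ) : ℂ) := by
  set U := (h.eigenvectorUnitary : Matrix ι ι ℂ) with hU
  have e : star W * ρ * W = star (star U * W) * Matrix.diagonal (fun i => (h.eigenvalues i : ℂ))
      * (star U * W) := by
    conv_lhs => rw [spec_eq h]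
    simp only [star_mul, star_star, Matrix.mul_assoc, hU]
  rw [e, Matrix.mul_apply]
  push_cast
  refine Finset.sum_congr rfl fun k _ => ?_
  rw [Matrix.mul_diagonal, Matrix.star_apply, ← Complex.conj_mul']
  simp only [RCLike.star_def]
  ring

lemma vnEntropy_le_diag {ι : Type} [Fintype ι] [DecidableEq ι] {ρ : Matrix ι ι ℂ}
    (h : ρ.PosSemidef) (W : Matrix ι ι ℂ) (hW : W ∈ Matrix.unitaryGroup ι ℂ) :
    vnEntropy ρ ≤ ∑ i, Real.negMulLog ((star W * ρ * W) i i).re := by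
  rw [vnEntropy_eq h.1]
  simp only [diag_entry h.1, Complex.ofReal_re]
  have hPm : star (h.1.eigenvectorUnitary : Matrix ι ι ℂ) * W ∈ Matrix.unitaryGroup ι ℂ :=
    mul_mem (star h.1.eigenvectorUnitary).2 hW
  set P := star (h.1.eigenvectorUnitary : Matrix ι ι ℂ) * W
  have hc := unitary_sum_col (Matrix.mem_unitaryGroup_iff'.1 hPm)
  have hr := unitary_sum_row (Matrix.mem_unitaryGroup_iff.1 hPm)
  calc ∑ k, Real.negMulLog (h.1.eigenvalues k)
      = ∑ k, ∑ i, ‖P k i‖ ^ 2 * Real.negMulLog (h.1.eigenvalues k) := by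
        refine Finset.sum_congr rfl fun k _ => ?_
        rw [← Finset.sum_mul, hr, one_mul]
    _ = ∑ i, ∑ k, ‖P k i‖ ^ 2 * Real.negMulLog (h.1.eigenvalues k) := Finset.sum_comm
    _ ≤ _ := by
        refine Finset.sum_le_sum fun i _ => ?_
        have := Real.concaveOn_negMulLog.le_map_sum (t := Finset.univ) (w := fun k => ‖P k i‖ ^ 2)
          (p := h.1.eigenvalues) (fun k _ => by positivity) (hc i)
          (fun k _ => h.eigenvalues_nonneg k)
        simpa using this

lemma classical_subadd {X Y : Type} [Fintype X] [Fintype Y] (q : X → Y → ℝ)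
    (hq : ∀ x y, 0 ≤ q x y) (h1 : ∑ x, ∑ y, q x y = 1) :
    ∑ x, ∑ y, Real.negMulLog (q x y) ≤
      ∑ x, Real.negMulLog (∑ y, q x y) + ∑ y, Real.negMulLog (∑ x, q x y) := by
  set a := fun x => ∑ y, q x y with ha
  set b := fun y => ∑ x, q x y with hb
  have hb1 : ∑ y, b y = 1 := by rw [← h1, Finset.sum_comm]
  have ha0 : ∀ x y, q x y ≤ a x := fun x y =>
    Finset.single_le_sum (f := fun y => q x y) (fun y _ => hq x y) (Finset.mem_univ y)
  have hb0 : ∀ x y, q x y ≤ b y := fun x y =>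
    Finset.single_le_sum (f := fun x => q x y) (fun x _ => hq x y) (Finset.mem_univ x)
  have key : ∀ x y, Real.negMulLog (q x y) + q x y * Real.log (a x) + q x y * Real.log (b y)
      ≤ a x * b y - q x y := by
    intro x y
    rcases (hq x y).eq_or_lt with h | h
    · rw [← h]
      have : 0 ≤ a x * b y := mul_nonneg ((hq x y).trans (ha0 x y)) ((hq x y).trans (hb0 x y))
      simpa using this
    · have hax := h.trans_le (ha0 x y)
      have hbx := h.trans_le (hb0 x y)
      have hl := Real.log_le_sub_one_of_pos (x := a x * b y / q x y) (by positivity)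
      rw [Real.log_div (by positivity) h.ne', Real.log_mul hax.ne' hbx.ne'] at hl
      have := mul_le_mul_of_nonneg_left hl h.le
      have e : q x y * (a x * b y / q x y - 1) = a x * b y - q x y := by field_simp
      rw [e] at this
      unfold Real.negMulLog
      linarith
  have hs := Finset.sum_le_sum fun x (_ : x ∈ Finset.univ) =>
    Finset.sum_le_sum fun y (_ : y ∈ Finset.univ) => key x y
  simp only [Finset.sum_add_distrib, Finset.sum_sub_distrib] at hs
  have e1 : ∑ x, ∑ y, q x y * Real.log (a x) = - ∑ x, Real.negMulLog (a x) := by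
    rw [← Finset.sum_neg_distrib]
    refine Finset.sum_congr rfl fun x _ => ?_
    rw [← Finset.sum_mul]; simp [Real.negMulLog, ha]
  have e2 : ∑ x, ∑ y, q x y * Real.log (b y) = - ∑ y, Real.negMulLog (b y) := by
    rw [Finset.sum_comm, ← Finset.sum_neg_distrib]
    refine Finset.sum_congr rfl fun x _ => ?_
    rw [← Finset.sum_mul]; simp [Real.negMulLog, hb]
  have e3 : ∑ x, ∑ y, a x * b y = 1 := by
    simp only [← Finset.mul_sum, hb1, mul_one]; exact h1
  linarith [e1, e2, e3, hs, h1]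

open Kronecker in
lemma quantum_subadd {X Y : Type} [Fintype X] [DecidableEq X] [Fintype Y] [DecidableEq Y]
    {ρ : Matrix (X × Y) (X × Y) ℂ} (h : ρ.PosSemidef) (ht : ρ.trace = 1)
    {σ : Matrix X X ℂ} {τ : Matrix Y Y ℂ} (hσ : σ.IsHermitian) (hτ : τ.IsHermitian)
    (eσ : ∀ x x', σ x x' = ∑ y, ρ (x, y) (x', y))
    (eτ : ∀ y y', τ y y' = ∑ x, ρ (x, y) (x, y')) :
    vnEntropy ρ ≤ vnEntropy σ + vnEntropy τ := by
  set U := (hσ.eigenvectorUnitary : Matrix X X ℂ) with hU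
  set V := (hτ.eigenvectorUnitary : Matrix Y Y ℂ) with hV
  have hUm : U ∈ Matrix.unitaryGroup X ℂ := hσ.eigenvectorUnitary.2
  have hVm : V ∈ Matrix.unitaryGroup Y ℂ := hτ.eigenvectorUnitary.2
  have hW : U ⊗ₖ V ∈ Matrix.unitaryGroup (X × Y) ℂ := Matrix.kronecker_mem_unitary hUm hVm
  set W := U ⊗ₖ V with hWd
  have hps : (star W * ρ * W).PosSemidef := by
    simpa [Matrix.star_eq_conjTranspose] using h.conjTranspose_mul_mul_same W
  have ent : ∀ i j, (star W * ρ * W) (i, j) (i, j) = ∑ x', ∑ y', ∑ x, ∑ y,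
      star (U x i) * star (V y j) * ρ (x, y) (x', y') * (U x' i * V y' j) := by
    intro i j
    simp [Matrix.mul_apply, Fintype.sum_prod_type, hWd, Matrix.star_apply, Finset.sum_mul,
      Matrix.kroneckerMap_apply]
  have hUU : ∀ x x', ∑ i, U x i * star (U x' i) = if x = x' then 1 else 0 := by
    intro x x'
    have := congrFun (congrFun (Matrix.mem_unitaryGroup_iff.1 hUm) x) x'
    rwa [Matrix.mul_apply, Matrix.one_apply] at this
  have hVV : ∀ x x', ∑ i, V x i * star (V x' i) = if x = x' then 1 else 0 := by
    intro x x'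
    have := congrFun (congrFun (Matrix.mem_unitaryGroup_iff.1 hVm) x) x'
    rwa [Matrix.mul_apply, Matrix.one_apply] at this
  have m1 : ∀ i, ∑ j, (star W * ρ * W) (i, j) (i, j) = hσ.eigenvalues i := by
    intro i
    have := congrFun (congrFun (star_eig hσ) i) i
    rw [Matrix.diagonal_apply_eq, Matrix.mul_apply] at this
    rw [← this]
    simp only [ent, Matrix.mul_apply, Matrix.star_apply, eσ, Finset.sum_mul, Finset.mul_sum]
    rw [Finset.sum_comm]
    refine Finset.sum_congr rfl fun x' _ => ?_
    rw [Finset.sum_comm]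
    conv_rhs => rw [Finset.sum_comm]
    conv_lhs => enter [2, y']; rw [Finset.sum_comm]
    conv_lhs => rw [Finset.sum_comm]
    conv_rhs => rw [Finset.sum_comm]
    refine Finset.sum_congr rfl fun x _ => ?_
    refine Finset.sum_congr rfl fun y' _ => ?_
    rw [Finset.sum_comm]
    rw [Finset.sum_eq_single y']
    · have := hVV y' y'
      rw [if_pos rfl] at this
      calc _ = (star (U x i) * ρ (x, y') (x', y') * U x' i) * ∑ j, V y' j * star (V y' j) := by
            rw [Finset.mul_sum]; exact Finset.sum_congr rfl fun j _ => by ring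
        _ = _ := by rw [this, mul_one]
    · intro y _ hy
      have := hVV y' y
      rw [if_neg (Ne.symm hy)] at this
      calc _ = (star (U x i) * ρ (x, y) (x', y') * U x' i) * ∑ j, V y' j * star (V y j) := by
            rw [Finset.mul_sum]; exact Finset.sum_congr rfl fun j _ => by ring
        _ = _ := by rw [this, mul_zero]
    · simp
  have m2 : ∀ j, ∑ i, (star W * ρ * W) (i, j) (i, j) = hτ.eigenvalues j := by
    intro j
    have := congrFun (congrFun (star_eig hτ) j) j
    rw [Matrix.diagonal_apply_eq, Matrix.mul_apply] at this
    rw [← this]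
    simp only [ent, Matrix.mul_apply, Matrix.star_apply, eτ, Finset.sum_mul, Finset.mul_sum]
    rw [Finset.sum_comm]
    conv_lhs => enter [2, x']; rw [Finset.sum_comm]
    rw [Finset.sum_comm]
    refine Finset.sum_congr rfl fun y' _ => ?_
    conv_lhs => enter [2, x', 2, i]; rw [Finset.sum_comm]
    conv_lhs => enter [2, x']; rw [Finset.sum_comm]
    rw [Finset.sum_comm]
    refine Finset.sum_congr rfl fun y _ => ?_
    refine Finset.sum_congr rfl fun x' _ => ?_
    rw [Finset.sum_comm]
    rw [Finset.sum_eq_single x']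
    · have := hUU x' x'
      rw [if_pos rfl] at this
      calc _ = (star (V y j) * ρ (x', y) (x', y') * V y' j) * ∑ j, U x' j * star (U x' j) := by
            rw [Finset.mul_sum]; exact Finset.sum_congr rfl fun j _ => by ring
        _ = _ := by rw [this, mul_one]
    · intro x _ hx
      have := hUU x' x
      rw [if_neg (Ne.symm hx)] at this
      calc _ = (star (V y j) * ρ (x, y) (x', y') * V y' j) * ∑ j, U x' j * star (U x j) := by
            rw [Finset.mul_sum]; exact Finset.sum_congr rfl fun j _ => by ring
        _ = _ := by rw [this, mul_zero]
    · simp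
  have htr : (star W * ρ * W).trace = 1 := by
    rw [Matrix.mul_assoc, Matrix.trace_mul_comm, Matrix.mul_assoc,
      Matrix.mem_unitaryGroup_iff.1 hW, Matrix.mul_one, ht]
  have hd : ∀ p, 0 ≤ ((star W * ρ * W) p p).re := fun p => by
    have := hps.diag_nonneg (i := p)
    exact (Complex.le_def.1 this).1
  have c := classical_subadd (fun i j => ((star W * ρ * W) (i, j) (i, j)).re)
    (fun i j => hd _) (by
      have := congrArg Complex.re htr
      simpa [Matrix.trace, Fintype.sum_prod_type] using this)
  have c1 : ∀ i, ∑ j, ((star W * ρ * W) (i, j) (i, j)).re = hσ.eigenvalues i := fun i => by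
    rw [← Complex.re_sum, m1, Complex.ofReal_re]
  have c2 : ∀ j, ∑ i, ((star W * ρ * W) (i, j) (i, j)).re = hτ.eigenvalues j := fun i => by
    rw [← Complex.re_sum, m2, Complex.ofReal_re]
  simp only [c1, c2] at c
  rw [vnEntropy_eq hσ, vnEntropy_eq hτ]
  refine (vnEntropy_le_diag h W hW).trans ?_
  rw [Fintype.sum_prod_type]
  exact c

lemma log_two_bound {ι : Type} [Fintype ι] (hc : Fintype.card ι = 2) (l : ι → ℝ)
    (h0 : ∀ i, 0 ≤ l i) (h1 : ∑ i, l i = 1)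
    (hl : Real.log 2 ≤ ∑ i, Real.negMulLog (l i)) :
    (∑ i, Real.negMulLog (l i) = Real.log 2) ∧ ∀ i, l i = 1 / 2 := by
  have key : ∀ i, Real.negMulLog (l i) - l i * Real.log 2 ≤ 1 / 2 - l i ∧
      (Real.negMulLog (l i) - l i * Real.log 2 = 1 / 2 - l i → l i = 1 / 2) := by
    intro i
    rcases (h0 i).eq_or_lt with h | h
    · rw [← h]; norm_num
    · have e : Real.negMulLog (l i) - l i * Real.log 2 = l i * Real.log (1 / (2 * l i)) := by
        rw [Real.log_div one_ne_zero (by positivity), Real.log_mul two_ne_zero h.ne']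
        simp [Real.negMulLog]; ring
      have e2 : 1 / 2 - l i = l i * (1 / (2 * l i) - 1) := by field_simp
      rw [e, e2]
      refine ⟨mul_le_mul_of_nonneg_left (Real.log_le_sub_one_of_pos (by positivity)) h.le, ?_⟩
      intro he
      by_contra hne
      have h3 : 1 / (2 * l i) ≠ 1 := by
        intro h4; apply hne; field_simp at h4; linarith
      have := Real.log_lt_sub_one_of_pos (x := 1 / (2 * l i)) (by positivity) h3
      exact (mul_lt_mul_of_pos_left this h).ne he
  have s1 : ∑ i, (Real.negMulLog (l i) - l i * Real.log 2) =
      ∑ i, Real.negMulLog (l i) - Real.log 2 := by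
    rw [Finset.sum_sub_distrib, ← Finset.sum_mul, h1, one_mul]
  have s2 : ∑ i, (1 / 2 - l i) = 0 := by
    rw [Finset.sum_sub_distrib, h1]; simp [hc]
  have hle := Finset.sum_le_sum fun i (_ : i ∈ Finset.univ) => (key i).1
  rw [s1, s2] at hle
  have heq : ∑ i, Real.negMulLog (l i) = Real.log 2 := by linarith
  refine ⟨heq, fun i => (key i).2 ?_⟩
  have := (Finset.sum_eq_sum_iff_of_le fun i (_ : i ∈ Finset.univ) => (key i).1).1
    (by rw [s1, s2, heq, sub_self])
  exact this i (Finset.mem_univ i)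

/-- The matrix of amplitudes of `ψ` with respect to the cut `A | Aᶜ`. -/
def ampl {m : ℕ} (ψ : (Fin m → Fin 2) → ℂ) (A : Finset (Fin m)) :
    Matrix ({x // x ∈ A} → Fin 2) ({x // x ∈ Aᶜ} → Fin 2) ℂ :=
  fun u w => ψ (glue A u w)

lemma reducedDensity_eq {m : ℕ} (ψ : (Fin m → Fin 2) → ℂ) (A : Finset (Fin m)) :
    reducedDensity ψ A = ampl ψ A * (ampl ψ A).conjTranspose := by
  ext u v
  simp [reducedDensity, ampl, Matrix.mul_apply]

lemma reducedDensity_psd {m : ℕ} (ψ : (Fin m → Fin 2) → ℂ) (A : Finset (Fin m)) :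
    (reducedDensity ψ A).PosSemidef := by
  rw [reducedDensity_eq]
  exact Matrix.posSemidef_self_mul_conjTranspose _

/-- Gluing as an equivalence. -/
def glueEquiv {m : ℕ} (A : Finset (Fin m)) :
    ({x // x ∈ A} → Fin 2) × ({x // x ∈ Aᶜ} → Fin 2) ≃ (Fin m → Fin 2) where
  toFun p := glue A p.1 p.2
  invFun f := (fun i => f i, fun i => f i)
  left_inv p := by
    ext i
    · simp [glue, i.2]
    · simp [glue, Finset.mem_compl.1 i.2]
  right_inv f := by
    funext i
    by_cases h : i ∈ A <;> simp [glue, h]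

lemma reducedDensity_trace {m : ℕ} (ψ : (Fin m → Fin 2) → ℂ)
    (hn : ∑ x : Fin m → Fin 2, ‖ψ x‖ ^ 2 = 1) (A : Finset (Fin m)) :
    (reducedDensity ψ A).trace = 1 := by
  have h : ((∑ x : Fin m → Fin 2, ‖ψ x‖ ^ 2 : ℝ) : ℂ) = 1 := by rw [hn]; simp
  rw [← h, ← (glueEquiv A).sum_comp, Fintype.sum_prod_type]
  push_cast
  refine Finset.sum_congr rfl fun u _ => Finset.sum_congr rfl fun w _ => ?_
  rw [Complex.mul_conj']
  rfl

lemma Sent_compl {m : ℕ} (ψ : (Fin m → Fin 2) → ℂ) (A : Finset (Fin m)) :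
    Sent ψ Aᶜ = Sent ψ A := by
  unfold Sent
  rw [reducedDensity_eq ψ A, vnEntropy_mul_comm,
    ← vnEntropy_transpose (Matrix.isHermitian_conjTranspose_mul_self _)]
  congr 1
  ext w w'
  let e : ({x // x ∈ A} → Fin 2) ≃ ({x // x ∈ Aᶜᶜ} → Fin 2) :=
    Equiv.arrowCongr (Equiv.subtypeEquivRight (by simp)) (Equiv.refl _)
  have hg : ∀ u w, glue Aᶜ w (e u) = glue A u w := by
    intro u w
    funext i
    by_cases h : i ∈ A <;> simp [glue, h, e, Equiv.arrowCongr, Equiv.subtypeEquivRight,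
      Equiv.subtypeEquiv]
  simp only [reducedDensity, Matrix.transpose_apply, Matrix.mul_apply, ampl,
    Matrix.conjTranspose_apply]
  rw [← e.sum_comp]
  refine Finset.sum_congr rfl fun u _ => ?_
  rw [hg, hg, mul_comm]; rfl

/-- Merge of three partial assignments. -/
def glue3 {m : ℕ} (A B : Finset (Fin m)) (u : {x // x ∈ A} → Fin 2)
    (v : {x // x ∈ B} → Fin 2) (w : {x // x ∈ (A ∪ B)ᶜ} → Fin 2) : Fin m → Fin 2 :=
  fun x => if h : x ∈ A then u ⟨x, h⟩ else if h' : x ∈ B then v ⟨x, h'⟩ else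
    w ⟨x, by simp [h, h']⟩

/-- Splitting of assignments on `A ∪ B`. -/
def unionEquiv {m : ℕ} (A B C : Finset (Fin m)) (hAB : Disjoint A B) (hC : C = A ∪ B) :
    ({x // x ∈ A} → Fin 2) × ({x // x ∈ B} → Fin 2) ≃ ({x // x ∈ C} → Fin 2) where
  toFun p := fun x => if h : x.1 ∈ A then p.1 ⟨x, h⟩ else p.2 ⟨x, by
    have := Finset.mem_union.1 (hC ▸ x.2 : x.1 ∈ A ∪ B); exact this.resolve_left h⟩
  invFun f := (fun i => f ⟨i, by rw [hC]; simp [i.2]⟩, fun i => f ⟨i, by rw [hC]; simp [i.2]⟩)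
  left_inv p := by
    ext i
    · simp [i.2]
    · simp [Finset.disjoint_right.1 hAB i.2]
  right_inv f := by
    funext i
    by_cases h : i.1 ∈ A <;> simp [h]

lemma Sent_union_le {m : ℕ} (ψ : (Fin m → Fin 2) → ℂ)
    (hn : ∑ x : Fin m → Fin 2, ‖ψ x‖ ^ 2 = 1) (A B : Finset (Fin m)) (hAB : Disjoint A B) :
    Sent ψ (A ∪ B) ≤ Sent ψ A + Sent ψ B := by
  have hd : ∀ i, i ∈ B → i ∉ A := fun i hi => Finset.disjoint_right.1 hAB hi
  let e := unionEquiv A B (A ∪ B) hAB rfl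
  let eA := unionEquiv B (A ∪ B)ᶜ Aᶜ
    (by rw [Finset.disjoint_left]; intro i hi; simp [hi])
    (by ext i; have := hd i; simp; tauto)
  let eB := unionEquiv A (A ∪ B)ᶜ Bᶜ
    (by rw [Finset.disjoint_left]; intro i hi; simp [hi])
    (by ext i; have := hd i; simp; tauto)
  have hC : ∀ u v w, glue (A ∪ B) (e (u, v)) w = glue3 A B u v w := by
    intro u v w; funext i
    by_cases h : i ∈ A <;> by_cases h' : i ∈ B <;> simp [glue, glue3, e, unionEquiv, h, h']
  have hA : ∀ u v w, glue A u (eA (v, w)) = glue3 A B u v w := by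
    intro u v w; funext i
    by_cases h : i ∈ A <;> by_cases h' : i ∈ B <;> simp [glue, glue3, eA, unionEquiv, h, h']
  have hB : ∀ u v w, glue B v (eB (u, w)) = glue3 A B u v w := by
    intro u v w; funext i
    have := hd i
    by_cases h : i ∈ A <;> by_cases h' : i ∈ B <;>
      simp [glue, glue3, eB, unionEquiv, h, h'] <;> tauto
  unfold Sent
  rw [← vnEntropy_reindex (reducedDensity_psd ψ (A ∪ B)).1 e]
  refine quantum_subadd ((reducedDensity_psd ψ (A ∪ B)).submatrix e) ?_
    (reducedDensity_psd ψ A).1 (reducedDensity_psd ψ B).1 ?_ ?_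
  · rw [← reducedDensity_trace ψ hn (A ∪ B)]
    exact e.sum_comp (fun p => reducedDensity ψ (A ∪ B) p p)
  · intro x x'
    simp only [reducedDensity, Matrix.submatrix_apply, hC]
    rw [← eA.sum_comp, Fintype.sum_prod_type]
    simp only [hA]
  · intro x x'
    simp only [reducedDensity, Matrix.submatrix_apply, hC]
    rw [← eB.sum_comp, Fintype.sum_prod_type]
    simp only [hB]

lemma single_of_ge {m : ℕ} (ψ : (Fin m → Fin 2) → ℂ)
    (hn : ∑ x : Fin m → Fin 2, ‖ψ x‖ ^ 2 = 1) (i : Fin m)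
    (h : Real.log 2 ≤ Sent ψ {i}) : Sent ψ {i} = Real.log 2 ∧ MaximallyMixed ψ {i} := by
  have hp := reducedDensity_psd ψ {i}
  have ht := reducedDensity_trace ψ hn {i}
  rw [hp.1.trace_eq_sum_eigenvalues] at ht
  unfold Sent at h ⊢
  rw [vnEntropy_eq hp.1] at h ⊢
  obtain ⟨h1, h2⟩ := log_two_bound (by simp) hp.1.eigenvalues hp.eigenvalues_nonneg
    (by have := congrArg Complex.re ht; simpa using this) h
  refine ⟨h1, ?_⟩
  unfold MaximallyMixed
  rw [spec_eq hp.1]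
  simp only [h2]
  have e : (Matrix.diagonal fun _ : {x // x ∈ ({i} : Finset (Fin m))} → Fin 2 =>
      (((1 / 2 : ℝ)) : ℂ)) = ((2 : ℂ)⁻¹) • 1 := by
    rw [Matrix.smul_one_eq_diagonal]; simp
  rw [e, Matrix.mul_smul, Matrix.smul_mul, Matrix.mul_one,
    Matrix.mem_unitaryGroup_iff.1 hp.1.eigenvectorUnitary.2]
  simp

theorem stmt15 (n : ℕ) (hn : 3 ≤ n) (Γ : Finset (Fin n) → Prop)
    (hmono : Monotonic Γ) (hnc : NoCloning Γ) (hnr : NoRedundancy Γ)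
    (ψ : (Fin (n + 1) → Fin 2) → ℂ) (hψ : IsPureQSSState Γ ψ) :
    ∀ i : Fin n, Sent ψ {i.succ} = Real.log 2 ∧ MaximallyMixed ψ {i.succ} := by
  intro i
  have hN := hψ.normalized
  refine single_of_ge ψ hN _ ?_
  obtain ⟨A, ⟨hA, hmin⟩, hi⟩ := hnr i
  have r := hψ.recover A hA
  have s := hψ.secrecy (A.erase i) (hmin _ (Finset.erase_ssubset hi))
  have hins : posOf A = posOf (A.erase i) ∪ {i.succ} := by
    unfold posOf
    conv_lhs => rw [← Finset.insert_erase hi, Finset.image_insert]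
    ext x; simp [or_comm]
  have hni : i.succ ∉ posOf (A.erase i) := by simp [posOf]
  have s1 := Sent_union_le ψ hN (posOf (A.erase i)) {i.succ} (by simpa using hni)
  rw [← hins] at s1
  have hni2 : i.succ ∉ insert 0 (posOf (A.erase i)) := by
    simp [hni, Fin.succ_ne_zero]
  have s2 := Sent_union_le ψ hN (insert 0 (posOf A))ᶜ {i.succ} (by
    simp [hins])
  have e : (insert 0 (posOf A))ᶜ ∪ {i.succ} = (insert 0 (posOf (A.erase i)))ᶜ := by
    rw [hins]
    ext x
    by_cases hx : x = i.succ
    · subst hx; simpa using hni2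
    · simp [hx]
  rw [e, Sent_compl, Sent_compl] at s2
  linarith
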